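/- Let k ≥ 2 be a natural number and let S ⊆ ℕ be a k-automatic set. Then the upper density of S, limsup_{N→∞} π_S(N)/N, is a rational number. -/

import Mathlib

open Filter

/-- A sequence `h : ℕ → Δ` is `k`-automatic if there is a DFAO (finite state set `Q`,
initial state `q₀`, transition function `δ`, output function `τ`) computing `h n` by
reading the base-`k` digits of `n` from the most significant digit to the least. -/
def IsAutomaticSeq {Δ : Type*} (k : ℕ) (h : ℕ → Δ) : Prop :=
  ∃ (Q : Type) (_ : Fintype Q) (q₀ : Q) (δ : Q → ℕ → Q) (τ : Q → Δ),
    ∀ n : ℕ, h n = τ (((Nat.digits k n).reverse).foldl δ q₀)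

/-- A set `S ⊆ ℕ` is `k`-automatic if its characteristic function is `k`-automatic. -/
def IsAutomaticSet (k : ℕ) (S : Set ℕ) : Prop :=
  IsAutomaticSeq k (S.indicator fun _ => (1 : ℕ))

/-- `piCount S N` is the number of elements of `S` that are less than `N`. -/
noncomputable def piCount (S : Set ℕ) (N : ℕ) : ℕ := (S ∩ Set.Iio N).ncard

/-!
Once leading zeros are absorbed, the state `s n` reached on input `n` satisfies
`s (K * n + d) = δ (s n) d`, and `K` may be replaced by any power of itself.

Summing a weight `v` over the states `s n`, `n < K * N`, amounts to summing `K` times its average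
over the next digit, a Markov operator `T`. For a suitable power of `K`, reading the digit `0` is
idempotent on states; this rules out periodicity, so `T ^ n (T u - u) → 0`, and `v` splits over `ℚ`
as `a + (T u - u)` with `T a = a`. The second summand does not contribute to the density.

For an invariant weight the partial sums satisfy `φ (K * N + d) = K * φ N + W (s N) d`. Maximising
the ratio `φ N / N` by choosing the successive digits is then a discounted decision problem with
finitely many states and actions. It has an optimal stationary policy, and the limiting ratio of
each stationary policy is rational, as it is computed by a linear system over `ℚ`. The upper density
is the largest of these finitely many ratios.
-/

section MarkovOperator

lemma exists_forall_abs_le {Q F : Type*} [Finite Q] [AddGroup F] [LinearOrder F] (u : Q → F) :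
    ∃ C, ∀ q, |u q| ≤ C :=
  let ⟨C, hC⟩ := (Set.finite_range fun q => |u q|).bddAbove
  ⟨C, fun q => hC ⟨q, rfl⟩⟩

lemma sum_pow_apply_sub {R M : Type*} [Ring R] [AddCommGroup M] [Module R M] (T : Module.End R M)
    (u : M) (N : ℕ) : ∑ i ∈ Finset.range N, (T ^ i) (T u - u) = (T ^ N) u - u := by
  simpa [LinearMap.sum_apply] using LinearMap.congr_fun (geom_sum_mul T N) u

variable {Q F : Type*} [Field F] [LinearOrder F] [IsStrictOrderedRing F]

/-- `T` is a Markov operator on functions on `Q` which moves from `q` to `e q` with probability at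
least `θ`. Positivity, `T 1 = 1` and the lower bound on the transition probability are all encoded
in how `T` acts on upper bounds. -/
structure MarkovMinorized (T : Module.End F (Q → F)) (e : Q → Q) (θ : F) : Prop where
  pos : 0 < θ
  le_one : θ ≤ 1
  apply_le_sub : ∀ u c, (∀ q, u q ≤ c) → ∀ q, T u q ≤ c - θ * (c - u (e q))

namespace MarkovMinorized

variable {T : Module.End F (Q → F)} {e : Q → Q} {θ : F} {u : Q → F} {c η : F}

lemma apply_le (hT : MarkovMinorized T e θ) (hu : ∀ q, u q ≤ c) (q : Q) : T u q ≤ c :=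
  (hT.apply_le_sub u c hu q).trans <|
    sub_le_self _ (mul_nonneg hT.pos.le (sub_nonneg.2 (hu (e q))))

lemma pow_apply_le (hT : MarkovMinorized T e θ) (hu : ∀ q, u q ≤ c) (n : ℕ) (q : Q) :
    (T ^ n) u q ≤ c := by
  induction n generalizing q with
  | zero => exact hu q
  | succ n ih =>
    rw [pow_succ', Module.End.mul_apply]
    exact hT.apply_le ih q

lemma abs_pow_apply_le (hT : MarkovMinorized T e θ) (hu : ∀ q, |u q| ≤ c) (n : ℕ) (q : Q) :
    |(T ^ n) u q| ≤ c := by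
  have upper := hT.pow_apply_le (fun q => (le_abs_self _).trans (hu q)) n q
  have lower := hT.pow_apply_le (u := -u) (fun q => (neg_le_abs _).trans (hu q)) n q
  rw [map_neg, Pi.neg_apply] at lower
  exact abs_le.2 ⟨neg_le.1 lower, upper⟩

lemma pow_succ_apply_le_sub (hT : MarkovMinorized T e θ) (he : ∀ q, e (e q) = e q)
    (hu : ∀ q, u q ≤ c) (n : ℕ) (q : Q) :
    (T ^ (n + 1)) u q ≤ c - θ ^ (n + 1) * (c - u (e q)) := by
  induction n generalizing u with
  | zero => simpa using hT.apply_le_sub u c hu q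
  | succ n ih =>
    have step : θ * (c - u (e q)) ≤ c - T u (e q) := by
      have := hT.apply_le_sub u c hu (e q)
      rw [he] at this
      linarith
    calc (T ^ (n + 1 + 1)) u q = (T ^ (n + 1)) (T u) q := by rw [pow_succ, Module.End.mul_apply]
      _ ≤ c - θ ^ (n + 1) * (c - T u (e q)) := ih (hT.apply_le hu)
      _ ≤ c - θ ^ (n + 1) * (θ * (c - u (e q))) := by
        gcongr
        exact pow_nonneg hT.pos.le _
      _ = c - θ ^ (n + 1 + 1) * (c - u (e q)) := by ring

lemma sub_le_pow_apply_of_le_pow_apply (hT : MarkovMinorized T e θ) (he : ∀ q, e (e q) = e q)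
    (hu : ∀ q, u q ≤ c) (hη : 0 ≤ η) {N : ℕ} {q : Q} (hq : c - θ ^ N * η ≤ (T ^ N) u q)
    {i : ℕ} (hi : i < N) : c - η ≤ (T ^ i) u (e q) := by
  obtain ⟨j, rfl⟩ := Nat.exists_eq_add_of_lt hi
  have split : (T ^ (i + j + 1)) u = (T ^ (j + 1)) ((T ^ i) u) := by
    rw [← Module.End.mul_apply, ← pow_add, add_comm (j + 1), add_assoc]
  have upper := hT.pow_succ_apply_le_sub he (hT.pow_apply_le hu i) j q
  rw [← split] at upper
  have hpow : θ ^ (i + j + 1) * η ≤ θ ^ (j + 1) * η := by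
    gcongr 1
    exact pow_le_pow_of_le_one hT.pos.le hT.le_one (by omega)
  have : c - (T ^ i) u (e q) ≤ η :=
    le_of_mul_le_mul_left (by linarith) (pow_pos hT.pos (j + 1))
  linarith

-- An almost maximal increment after `N` steps forces almost maximal increments at all earlier
-- times, all of them at the same point `e q`, so that they accumulate.
lemma mul_sub_le_of_le_pow_apply (hT : MarkovMinorized T e θ) (he : ∀ q, e (e q) = e q) {U : F}
    (hU : ∀ q, |u q| ≤ U) (hc : ∀ q, (T u - u) q ≤ c) (hη : 0 ≤ η) {N : ℕ} {q : Q}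
    (hq : c - θ ^ N * η ≤ (T ^ N) (T u - u) q) : N * (c - η) ≤ 2 * U :=
  calc
    N * (c - η) = ∑ _ ∈ Finset.range N, (c - η) := by
      rw [Finset.sum_const, Finset.card_range, nsmul_eq_mul]
    _ ≤ ∑ i ∈ Finset.range N, (T ^ i) (T u - u) (e q) := Finset.sum_le_sum fun i hi =>
      hT.sub_le_pow_apply_of_le_pow_apply he hc hη hq (Finset.mem_range.1 hi)
    _ = (T ^ N) u (e q) - u (e q) := by
      rw [← Finset.sum_apply, sum_pow_apply_sub, Pi.sub_apply]
    _ ≤ U - -U := sub_le_sub (abs_le.1 (hT.abs_pow_apply_le hU N (e q))).2 (abs_le.1 (hU (e q))).1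
    _ = 2 * U := by ring

end MarkovMinorized

lemma exists_sub_lt_apply_add [Archimedean F] {G : ℕ → F} {b η : F} (hb : ∀ n, b ≤ G n)
    (hη : 0 < η) (N : ℕ) : ∃ n, G n - η < G (n + N) := by
  by_contra! hG
  have drop : ∀ m : ℕ, G (m * N) ≤ G 0 - m * η := by
    intro m
    induction m with
    | zero => simp
    | succ m ih =>
      have := hG (m * N)
      rw [← Nat.succ_mul] at this
      push_cast
      linarith
  obtain ⟨m, hm⟩ := exists_nat_gt ((G 0 - b) / η)
  rw [div_lt_iff₀ hη] at hm
  linarith [drop m, hb (m * N)]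

namespace MarkovMinorized

variable [Finite Q] [Archimedean F] {T : Module.End F (Q → F)} {e : Q → Q} {θ ε : F}

lemma exists_pow_apply_sub_le (hT : MarkovMinorized T e θ) (he : ∀ q, e (e q) = e q) (u : Q → F)
    (hε : 0 < ε) : ∃ n, ∀ q, (T ^ n) (T u - u) q ≤ ε := by
  by_contra! hlarge
  have : Nonempty Q := ⟨(hlarge 0).choose⟩
  choose x hx using fun n => Finite.exists_max ((T ^ n) (T u - u))
  have hlarge_x : ∀ n, ε ≤ (T ^ n) (T u - u) (x n) := fun n =>
    let ⟨q, hq⟩ := hlarge n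
    hq.le.trans (hx n q)
  obtain ⟨U, hU⟩ := exists_forall_abs_le u
  obtain ⟨N, hN⟩ := exists_nat_gt (2 * U / (ε / 2))
  rw [div_lt_iff₀ (half_pos hε)] at hN
  obtain ⟨n, hn⟩ := exists_sub_lt_apply_add hlarge_x
    (mul_pos (pow_pos hT.pos N) (half_pos hε)) N
  have shift : T ((T ^ n) u) - (T ^ n) u = (T ^ n) (T u - u) := by
    rw [map_sub, ← Module.End.mul_apply, ← Module.End.mul_apply, pow_mul_comm']
  have hbound : N * ((T ^ n) (T u - u) (x n) - ε / 2) ≤ 2 * U := by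
    refine hT.mul_sub_le_of_le_pow_apply (u := (T ^ n) u) he (hT.abs_pow_apply_le hU n)
      (q := x (n + N)) ?_ (half_pos hε).le ?_
    · rw [shift]
      exact hx n
    · rw [shift, ← Module.End.mul_apply, ← pow_add, add_comm N]
      exact hn.le
  have : N * (ε / 2) ≤ N * ((T ^ n) (T u - u) (x n) - ε / 2) := by
    gcongr
    linarith [hlarge_x n]
  linarith

lemma exists_abs_pow_apply_sub_le (hT : MarkovMinorized T e θ) (he : ∀ q, e (e q) = e q)
    (u : Q → F) (hε : 0 < ε) : ∃ n, ∀ q, |(T ^ n) (T u - u) q| ≤ ε := by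
  obtain ⟨m, hm⟩ := hT.exists_pow_apply_sub_le he u hε
  obtain ⟨n, hn⟩ := hT.exists_pow_apply_sub_le he (-u) hε
  have neg_increment : T (-u) - -u = -(T u - u) := by rw [map_neg]; abel
  rw [neg_increment] at hn
  refine ⟨m + n, fun q => abs_le.2 ⟨?_, ?_⟩⟩
  · have := hT.pow_apply_le hn m q
    rw [← Module.End.mul_apply, ← pow_add, map_neg, Pi.neg_apply] at this
    exact neg_le.1 this
  · have := hT.pow_apply_le hm n q
    rwa [← Module.End.mul_apply, ← pow_add, add_comm] at this

lemma disjoint_ker_range_sub_one (hT : MarkovMinorized T e θ) (he : ∀ q, e (e q) = e q) :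
    Disjoint (LinearMap.ker (T - 1)) (LinearMap.range (T - 1)) := by
  rw [Submodule.disjoint_def]
  rintro _ hfix ⟨u, rfl⟩
  have hfixed : ∀ n, (T ^ n) (T u - u) = T u - u := fun n => by
    rw [Module.End.pow_apply]
    exact Function.iterate_fixed (sub_eq_zero.1 hfix) n
  funext q
  refine abs_nonpos_iff.1 (le_of_forall_pos_le_add fun ε hε => ?_)
  obtain ⟨n, hn⟩ := hT.exists_abs_pow_apply_sub_le he u hε
  rw [zero_add]
  have := hn q
  rw [hfixed] at this
  exact this

lemma exists_fixed_add_increment (hT : MarkovMinorized T e θ) (he : ∀ q, e (e q) = e q)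
    (v : Q → F) : ∃ a u, T a = a ∧ v = a + (T u - u) := by
  have hsup : LinearMap.ker (T - 1) ⊔ LinearMap.range (T - 1) = ⊤ := by
    refine Submodule.eq_top_of_disjoint _ _ ?_ (hT.disjoint_ker_range_sub_one he)
    rw [add_comm]
    exact (LinearMap.finrank_range_add_finrank_ker (T - 1)).ge
  obtain ⟨a, ha, _, ⟨u, rfl⟩, rfl⟩ := Submodule.mem_sup.1 (hsup ▸ Submodule.mem_top : v ∈ _)
  exact ⟨a, u, sub_eq_zero.1 ha, rfl⟩

end MarkovMinorized

end MarkovOperator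

section DecisionProblem

variable {Q A F : Type*} [Field F] {κ : F} {σ τ : Q → Q} {w z x y : Q → F}

/-- `x q` is the total discounted reward collected from `q` onwards under the dynamics `σ`, where
the reward `w` of the `i`-th visited state (counting from `0`) is discounted by `κ⁻¹ ^ (i + 1)`. -/
def IsDiscountedValue (κ : F) (σ : Q → Q) (w x : Q → F) : Prop :=
  ∀ q, κ * x q = w q + x (σ q)

lemma IsDiscountedValue.sub_const_mul (hx : IsDiscountedValue κ σ w x)
    (hy : IsDiscountedValue κ σ z y) (l : F) :
    IsDiscountedValue κ σ (fun q => w q - l * z q) fun q => x q - l * y q := fun q => by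
  linear_combination hx q - l * hy q

variable [Finite Q] [LinearOrder F] [IsStrictOrderedRing F]

lemma nonneg_of_apply_le_mul (hκ : 1 < κ) (hx : ∀ q, x (σ q) ≤ κ * x q) (q : Q) : 0 ≤ x q := by
  have : Nonempty Q := ⟨q⟩
  obtain ⟨p, hp⟩ := Finite.exists_min x
  have hmin : 0 ≤ (κ - 1) * x p := by linarith [hx p, hp (σ p)]
  exact (nonneg_of_mul_nonneg_right hmin (sub_pos.2 hκ)).trans (hp q)

namespace IsDiscountedValue

lemma le_of_le_step (hκ : 1 < κ) (hy : IsDiscountedValue κ τ z y)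
    (hx : ∀ q, κ * x q ≤ z q + x (τ q)) (q : Q) : x q ≤ y q := by
  refine sub_nonneg.1 (nonneg_of_apply_le_mul (x := y - x) (σ := τ) hκ (fun p => ?_) q)
  simp only [Pi.sub_apply]
  linarith [hx p, hy p]

lemma lt_of_lt_step (hκ : 1 < κ) (hy : IsDiscountedValue κ τ z y)
    (hx : ∀ q, κ * x q ≤ z q + x (τ q)) {q : Q} (hq : κ * x q < z q + x (τ q)) : x q < y q := by
  have hle := hy.le_of_le_step hκ hx (τ q)
  have : κ * x q < κ * y q := by linarith [hy q]
  exact lt_of_mul_lt_mul_left this (zero_lt_one.trans hκ).le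

lemma unique (hκ : 1 < κ) (hx : IsDiscountedValue κ σ w x) (hy : IsDiscountedValue κ σ w y) :
    x = y :=
  funext fun q => le_antisymm (hy.le_of_le_step hκ (fun p => (hx p).le) q)
    (hx.le_of_le_step hκ (fun p => (hy p).le) q)

lemma nonneg (hκ : 1 < κ) (hx : IsDiscountedValue κ σ w x) (hw : ∀ q, 0 ≤ w q) (q : Q) :
    0 ≤ x q :=
  nonneg_of_apply_le_mul (σ := σ) hκ (fun p => by linarith [hx p, hw p]) q

end IsDiscountedValue

lemma exists_isDiscountedValue (hκ : 1 < κ) (σ : Q → Q) (w : Q → F) :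
    ∃ x, IsDiscountedValue κ σ w x := by
  let L : Module.End F (Q → F) := κ • 1 - LinearMap.funLeft F F σ
  have hL : ∀ x q, L x q = κ * x q - x (σ q) := fun _ _ => rfl
  have hinj : Function.Injective L := by
    refine (injective_iff_map_eq_zero L).2 fun x hx => ?_
    refine IsDiscountedValue.unique (σ := σ) (w := 0) hκ (fun q => ?_) fun q => by simp
    have := congrFun hx q
    rw [hL] at this
    simpa using sub_eq_zero.1 this
  obtain ⟨x, rfl⟩ := LinearMap.injective_iff_surjective.1 hinj w
  exact ⟨x, fun q => by rw [hL]; ring⟩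

-- Policy improvement: a policy of maximal total value is optimal, since a profitable deviation at
-- one state would increase the value there and decrease it nowhere.
lemma exists_optimal_policy [Finite A] [Nonempty A] (hκ : 1 < κ) (δ : Q → A → Q) (w : Q → A → F) :
    ∃ (g : Q → A) (V : Q → F), IsDiscountedValue κ (fun q => δ q (g q)) (fun q => w q (g q)) V ∧
      ∀ q d, w q d + V (δ q d) ≤ κ * V q := by
  classical
  cases nonempty_fintype Q
  choose V hV using fun g : Q → A =>
    exists_isDiscountedValue hκ (fun q => δ q (g q)) fun q => w q (g q)
  obtain ⟨g, hg⟩ := Finite.exists_max fun g => ∑ q, V g q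
  refine ⟨g, V g, hV g, fun q d => ?_⟩
  by_contra! hlt
  let g' := Function.update g q d
  have hstep : ∀ p, κ * V g p ≤ w p (g' p) + V g (δ p (g' p)) := by
    intro p
    rcases eq_or_ne p q with rfl | hp
    · simpa [g'] using hlt.le
    · simpa [g', hp] using (hV g p).le
  refine (hg g').not_gt (Finset.sum_lt_sum
    (fun p _ => (hV g').le_of_le_step hκ hstep p)
    ⟨q, Finset.mem_univ q, (hV g').lt_of_lt_step hκ hstep ?_⟩)
  simpa [g'] using hlt

end DecisionProblem

/-- `s n` is the state reached by an automaton with transitions `δ` on reading `n` in base `K`.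
Since `s 0 = δ (s 0) 0`, leading zeros do not matter. -/
def IsRun {Q : Type*} (K : ℕ) (δ : Q → ℕ → Q) (s : ℕ → Q) : Prop :=
  ∀ n d, d < K → s (K * n + d) = δ (s n) d

section GrowthRate

variable {Q F : Type*} [Field F] [LinearOrder F] [IsStrictOrderedRing F]
variable {K : ℕ} {δ : Q → ℕ → Q} {s : ℕ → Q} {φ : ℕ → F} {W : Q → ℕ → F}

lemma nonpos_of_apply_mul_add_le (hK : 1 < K) {f : ℕ → F}
    (hstep : ∀ n d, d < K → f (K * n + d) ≤ K * f n) (hdigit : ∀ n ∈ Finset.Ico 1 K, f n ≤ 0)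
    {n : ℕ} (hn : 0 < n) : f n ≤ 0 := by
  induction n using Nat.strong_induction_on with
  | _ n ih =>
    rcases lt_or_ge n K with hnK | hKn
    · exact hdigit n (Finset.mem_Ico.2 ⟨hn, hnK⟩)
    · have hquot := ih (n / K) (Nat.div_lt_self hn hK) (Nat.div_pos hKn (by omega))
      calc f n = f (K * (n / K) + n % K) := by rw [Nat.div_add_mod]
        _ ≤ K * f (n / K) := hstep _ _ (Nat.mod_lt n (by omega))
        _ ≤ 0 := mul_nonpos_of_nonneg_of_nonpos K.cast_nonneg hquot

variable [Finite Q]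

-- With `α` and `β` the values under the policy `g` of the rewards `W` and of the digits themselves,
-- `(φ N + α (s N)) / (N + β (s N))` is the limiting ratio of `φ` along the numbers obtained from
-- `N` by appending the digits that `g` prescribes; `l` is the largest of these ratios.
lemma exists_maximal_policy_rate (hK : 1 < K) (δ : Q → ℕ → Q) (s : ℕ → Q) (φ : ℕ → F)
    (W : Q → ℕ → F) :
    ∃ l : F,
      (∀ (g : Q → Fin K) (V : Q → F), IsDiscountedValue (K : F) (fun q => δ q (g q))
        (fun q => W q (g q) - l * (g q : ℕ)) V → ∀ N ∈ Finset.Ico 1 K, φ N + V (s N) ≤ l * N) ∧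
      ∃ (g : Q → Fin K) (V : Q → F), IsDiscountedValue (K : F) (fun q => δ q (g q))
        (fun q => W q (g q) - l * (g q : ℕ)) V ∧ ∃ N ∈ Finset.Ico 1 K, φ N + V (s N) = l * N := by
  classical
  cases nonempty_fintype Q
  have : NeZero K := ⟨by omega⟩
  have hκ : (1 : F) < K := mod_cast hK
  choose α hα using fun g : Q → Fin K =>
    exists_isDiscountedValue hκ (fun q => δ q (g q)) fun q => W q (g q)
  choose β hβ using fun g : Q → Fin K =>
    exists_isDiscountedValue hκ (fun q => δ q (g q)) fun q => ((g q : ℕ) : F)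
  have hpos : ∀ g, ∀ N ∈ Finset.Ico 1 K, 0 < N + β g (s N) := fun g N hN =>
    add_pos_of_pos_of_nonneg (mod_cast (Finset.mem_Ico.1 hN).1)
      ((hβ g).nonneg hκ (fun q => Nat.cast_nonneg _) (s N))
  obtain ⟨⟨g, N⟩, hmem, hmax⟩ := Finset.exists_max_image
    ((Finset.univ : Finset (Q → Fin K)) ×ˢ Finset.Ico 1 K)
    (fun gN => (φ gN.2 + α gN.1 (s gN.2)) / (gN.2 + β gN.1 (s gN.2)))
    ⟨(0, 1), by simpa using hK⟩
  have hN := (Finset.mem_product.1 hmem).2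
  refine ⟨(φ N + α g (s N)) / (N + β g (s N)), fun g' V hV N' hN' => ?_,
    g, _, (hα g).sub_const_mul (hβ g) _, N, hN, ?_⟩
  · rw [hV.unique hκ ((hα g').sub_const_mul (hβ g') _)]
    have := hmax (g', N') (Finset.mem_product.2 ⟨Finset.mem_univ _, hN'⟩)
    rw [div_le_iff₀ (hpos g' N' hN')] at this
    linarith
  · have := div_mul_cancel₀ (φ N + α g (s N)) (hpos g N hN).ne'
    linarith

lemma exists_linear_growth_rate (hK : 1 < K) (hs : IsRun K δ s)
    (hφ : ∀ N d, d < K → φ (K * N + d) = K * φ N + W (s N) d) :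
    ∃ l C : F, (∀ N > 0, φ N ≤ l * N + C) ∧ ∃ᶠ N : ℕ in atTop, l * N - C ≤ φ N := by
  have : NeZero K := ⟨by omega⟩
  have hκ : (1 : F) < K := mod_cast hK
  obtain ⟨l, hle, g, V, hV, N₀, hN₀, hzero⟩ := exists_maximal_policy_rate hK δ s φ W
  obtain ⟨g', V', hV', hopt⟩ := exists_optimal_policy hκ (fun q (d : Fin K) => δ q d)
    fun q d => W q d - l * (d : ℕ)
  obtain ⟨C, hC⟩ := exists_forall_abs_le V
  obtain ⟨C', hC'⟩ := exists_forall_abs_le V'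
  refine ⟨l, max C C', fun N hN => ?_, frequently_atTop.2 fun b => ?_⟩
  · have hpotential : φ N - l * N + V' (s N) ≤ 0 := by
      refine nonpos_of_apply_mul_add_le (f := fun N => φ N - l * N + V' (s N)) hK
        (fun N d hd => ?_) (fun N hN => by linarith [hle g' V' hV' N hN]) hN
      have := hopt (s N) ⟨d, hd⟩
      simp only [hφ N d hd, hs N d hd]
      push_cast
      linarith
    linarith [(abs_le.1 (hC' (s N))).1, le_max_right C C']
  · obtain ⟨N, hbN, -, hN⟩ : ∃ N ≥ b, 0 < N ∧ φ N + V (s N) = l * N := by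
      induction b with
      | zero => exact ⟨N₀, N₀.zero_le, (Finset.mem_Ico.1 hN₀).1, hzero⟩
      | succ b ih =>
        obtain ⟨N, hbN, hpos, hN⟩ := ih
        refine ⟨K * N + g (s N), by nlinarith, by positivity, ?_⟩
        rw [hφ N _ (g (s N)).isLt, hs N _ (g (s N)).isLt]
        push_cast
        linear_combination (K : F) * hN - hV (s N)
    exact ⟨N, hbN, by linarith [(abs_le.1 (hC (s N))).2, le_max_left C C']⟩

end GrowthRate

section DigitAverage

variable {Q F : Type*} [Field F] {K : ℕ} {δ : Q → ℕ → Q} {s : ℕ → Q}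

/-- The transition operator of the Markov chain which reads a uniformly random base-`K` digit. -/
def digitAverage (F : Type*) [Field F] (K : ℕ) (δ : Q → ℕ → Q) : Module.End F (Q → F) :=
  (K : F)⁻¹ • ∑ d ∈ Finset.range K, LinearMap.funLeft F F fun q => δ q d

lemma digitAverage_apply (u : Q → F) (q : Q) :
    digitAverage F K δ u q = (K : F)⁻¹ * ∑ d ∈ Finset.range K, u (δ q d) := by
  simp [digitAverage, LinearMap.sum_apply, LinearMap.funLeft_apply]

namespace IsRun

lemma sum_range_mul [CharZero F] (hs : IsRun K δ s) (hK : K ≠ 0) (u : Q → F) (N : ℕ) :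
    ∑ n ∈ Finset.range (K * N), u (s n) =
      K * ∑ n ∈ Finset.range N, digitAverage F K δ u (s n) := by
  have hK' : (K : F) ≠ 0 := mod_cast hK
  induction N with
  | zero => simp
  | succ N ih =>
    rw [Nat.mul_succ, Finset.sum_range_add, ih, Finset.sum_range_succ, mul_add,
      digitAverage_apply, mul_inv_cancel_left₀ hK']
    congr 1
    exact Finset.sum_congr rfl fun d hd => by rw [hs N d (Finset.mem_range.1 hd)]

lemma sum_range_pow_mul [CharZero F] (hs : IsRun K δ s) (hK : K ≠ 0) (u : Q → F) (m N : ℕ) :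
    ∑ n ∈ Finset.range (K ^ m * N), u (s n) =
      K ^ m * ∑ n ∈ Finset.range N, (digitAverage F K δ ^ m) u (s n) := by
  induction m generalizing u with
  | zero => simp
  | succ m ih =>
    rw [pow_succ', mul_assoc, hs.sum_range_mul hK, ih, pow_succ (digitAverage F K δ),
      Module.End.mul_apply]
    ring

lemma sum_range_mul_add_of_fixed [CharZero F] (hs : IsRun K δ s) {a : Q → F}
    (ha : digitAverage F K δ a = a) (N d : ℕ) (hd : d < K) :
    ∑ n ∈ Finset.range (K * N + d), a (s n) =
      K * ∑ n ∈ Finset.range N, a (s n) + ∑ c ∈ Finset.range d, a (δ (s N) c) := by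
  rw [Finset.sum_range_add, hs.sum_range_mul (by omega), ha]
  congr 1
  exact Finset.sum_congr rfl fun c hc => by rw [hs N c ((Finset.mem_range.1 hc).trans hd)]

end IsRun

variable [LinearOrder F] [IsStrictOrderedRing F]

lemma markovMinorized_digitAverage {d : ℕ} (hd : d < K) :
    MarkovMinorized (digitAverage F K δ) (fun q => δ q d) (K : F)⁻¹ where
  pos := inv_pos.2 (mod_cast Nat.zero_lt_of_lt hd)
  le_one := inv_le_one_of_one_le₀ (mod_cast Nat.one_le_of_lt hd)
  apply_le_sub u c hu q := by
    have hK : (K : F) ≠ 0 := mod_cast (Nat.zero_lt_of_lt hd).ne'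
    have hdeficit : c - digitAverage F K δ u q =
        (K : F)⁻¹ * ∑ i ∈ Finset.range K, (c - u (δ q i)) := by
      rw [digitAverage_apply, Finset.sum_sub_distrib, Finset.sum_const, Finset.card_range,
        nsmul_eq_mul, mul_sub, inv_mul_cancel_left₀ hK]
    have hterm : c - u (δ q d) ≤ ∑ i ∈ Finset.range K, (c - u (δ q i)) :=
      Finset.single_le_sum (f := fun i => c - u (δ q i))
        (fun i _ => sub_nonneg.2 (hu (δ q i))) (Finset.mem_range.2 hd)
    have := mul_le_mul_of_nonneg_left hterm (inv_nonneg.2 (K.cast_nonneg (α := F)))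
    linarith

lemma abs_sum_range_le {f : ℕ → F} {C : F} (hf : ∀ n, |f n| ≤ C) (N : ℕ) :
    |∑ n ∈ Finset.range N, f n| ≤ N * C := by
  simpa using (Finset.abs_sum_le_sum_abs f _).trans
    (Finset.sum_le_card_nsmul (Finset.range N) _ C fun n _ => hf n)

lemma IsRun.abs_sum_range_le_add (hs : IsRun K δ s) (hK : K ≠ 0) {w : Q → F} {m : ℕ} {C η : F}
    (hC : ∀ q, |w q| ≤ C) (hη : ∀ q, |(digitAverage F K δ ^ m) w q| ≤ η) (N : ℕ) :
    |∑ n ∈ Finset.range N, w (s n)| ≤ N * η + K ^ m * C := by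
  set M := N / K ^ m
  set r := N % K ^ m
  have hNM : N = K ^ m * M + r := (Nat.div_add_mod N (K ^ m)).symm
  have hη0 : 0 ≤ η := (abs_nonneg _).trans (hη (s 0))
  have hC0 : 0 ≤ C := (abs_nonneg _).trans (hC (s 0))
  have hMN : (K : F) ^ m * M ≤ N := mod_cast hNM.symm ▸ Nat.le_add_right _ r
  have hrK : (r : F) ≤ K ^ m := mod_cast (Nat.mod_lt N (Nat.pow_pos (Nat.pos_of_ne_zero hK))).le
  calc |∑ n ∈ Finset.range N, w (s n)|
      = |K ^ m * ∑ n ∈ Finset.range M, (digitAverage F K δ ^ m) w (s n) +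
          ∑ n ∈ Finset.range r, w (s (K ^ m * M + n))| := by
        rw [← hs.sum_range_pow_mul hK, ← Finset.sum_range_add, ← hNM]
    _ ≤ K ^ m * |∑ n ∈ Finset.range M, (digitAverage F K δ ^ m) w (s n)| +
          |∑ n ∈ Finset.range r, w (s (K ^ m * M + n))| := by
        refine (abs_add_le _ _).trans_eq ?_
        rw [abs_mul, abs_of_nonneg (by positivity : (0 : F) ≤ K ^ m)]
    _ ≤ K ^ m * (M * η) + r * C := by
        gcongr
        · exact abs_sum_range_le (fun n => hη (s n)) M
        · exact abs_sum_range_le (fun n => hC (s (K ^ m * M + n))) r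
    _ = K ^ m * M * η + r * C := by ring
    _ ≤ N * η + K ^ m * C := by gcongr

lemma IsRun.eventually_abs_sum_range_increment_le [Finite Q] [Archimedean F] (hs : IsRun K δ s)
    (hK : K ≠ 0) (hδ : ∀ q, δ (δ q 0) 0 = δ q 0) (u : Q → F) {ε : F} (hε : 0 < ε) :
    ∀ᶠ N : ℕ in atTop,
      |∑ n ∈ Finset.range N, (digitAverage F K δ u - u) (s n)| ≤ ε * N := by
  obtain ⟨C, hC⟩ := exists_forall_abs_le (digitAverage F K δ u - u)
  obtain ⟨m, hm⟩ := (markovMinorized_digitAverage (F := F) (δ := δ)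
    (Nat.pos_of_ne_zero hK)).exists_abs_pow_apply_sub_le hδ u (half_pos hε)
  obtain ⟨N₀, hN₀⟩ := exists_nat_ge (K ^ m * C / (ε / 2))
  rw [div_le_iff₀ (half_pos hε)] at hN₀
  filter_upwards [eventually_ge_atTop N₀] with N hN
  have hNN₀ : N₀ * (ε / 2) ≤ N * (ε / 2) := by gcongr
  linarith [hs.abs_sum_range_le_add hK hC hm N]

end DigitAverage

section UpperDensity

lemma limsup_div_eq_of_linear_growth {φ ψ : ℕ → ℚ} {l C : ℚ}
    (hupper : ∀ N > 0, φ N ≤ l * N + C) (hlower : ∃ᶠ N : ℕ in atTop, l * N - C ≤ φ N)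
    (hψ : ∀ ε : ℚ, 0 < ε → ∀ᶠ N : ℕ in atTop, |ψ N - φ N| ≤ ε * N) :
    atTop.limsup (fun N : ℕ => (ψ N : ℝ) / N) = l := by
  have hC : ∀ ε : ℚ, 0 < ε → ∀ᶠ N : ℕ in atTop, C ≤ ε * N := fun ε hε => by
    filter_upwards [eventually_ge_atTop ⌈C / ε⌉₊] with N hN
    rw [← div_le_iff₀' hε]
    exact Nat.ceil_le.1 hN
  have eventually_le : ∀ r : ℚ, l < r → ∀ᶠ N : ℕ in atTop, (ψ N : ℝ) / N ≤ r := fun r hr => by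
    have hε : 0 < (r - l) / 2 := half_pos (sub_pos.2 hr)
    filter_upwards [hC _ hε, hψ _ hε, eventually_gt_atTop 0] with N hCN hψN hN
    rw [div_le_iff₀ (mod_cast hN)]
    have : ψ N ≤ r * N := by linarith [hupper N hN, (abs_le.1 hψN).2]
    exact_mod_cast this
  have frequently_ge : ∀ r : ℚ, r < l → ∃ᶠ N : ℕ in atTop, (r : ℝ) ≤ (ψ N : ℝ) / N :=
    fun r hr => by
    have hε : 0 < (l - r) / 2 := half_pos (sub_pos.2 hr)
    refine (hlower.and_eventually
      ((hC _ hε).and ((hψ _ hε).and (eventually_gt_atTop 0)))).mono ?_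
    rintro N ⟨hφN, hCN, hψN, hN⟩
    rw [le_div_iff₀ (mod_cast hN)]
    have : r * N ≤ ψ N := by linarith [(abs_le.1 hψN).1]
    exact_mod_cast this
  have hbdd : atTop.IsBoundedUnder (· ≤ ·) fun N : ℕ => (ψ N : ℝ) / N :=
    isBoundedUnder_of_eventually_le (eventually_le (l + 1) (lt_add_one l))
  have hcobdd : atTop.IsCoboundedUnder (· ≤ ·) fun N : ℕ => (ψ N : ℝ) / N :=
    IsCoboundedUnder.of_frequently_ge (frequently_ge (l - 1) (sub_one_lt l))
  refine le_antisymm (le_of_forall_lt_rat_imp_le fun r hr => ?_)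
    (le_of_forall_rat_lt_imp_le fun r hr => ?_)
  · exact limsup_le_of_le hcobdd (eventually_le r (mod_cast hr))
  · exact le_limsup_of_frequently_le (frequently_ge r (mod_cast hr)) hbdd

lemma IsRun.exists_limsup_average_eq {Q : Type*} [Finite Q] {K : ℕ} {δ : Q → ℕ → Q} {s : ℕ → Q}
    (hs : IsRun K δ s) (hK : 1 < K) (hδ : ∀ q, δ (δ q 0) 0 = δ q 0) (v : Q → ℚ) :
    ∃ l : ℚ, atTop.limsup
      (fun N : ℕ => ((∑ n ∈ Finset.range N, v (s n) : ℚ) : ℝ) / N) = l := by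
  obtain ⟨a, u, ha, rfl⟩ := (markovMinorized_digitAverage (F := ℚ) (δ := δ)
    (Nat.zero_lt_of_lt hK)).exists_fixed_add_increment hδ v
  obtain ⟨l, C, hupper, hlower⟩ :=
    exists_linear_growth_rate (φ := fun N => ∑ n ∈ Finset.range N, a (s n))
      (W := fun q d => ∑ c ∈ Finset.range d, a (δ q c)) hK hs (hs.sum_range_mul_add_of_fixed ha)
  refine ⟨l, limsup_div_eq_of_linear_growth hupper hlower fun ε hε => ?_⟩
  filter_upwards [hs.eventually_abs_sum_range_increment_le (by omega) hδ u hε] with N hN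
  simpa only [← Finset.sum_sub_distrib, Pi.add_apply, add_sub_cancel_left] using hN

end UpperDensity

section Automaton

variable {Q : Type*} {k : ℕ}

/-- The transition which reads the `p` base-`k` digits of `D`, from the most significant one. -/
def blockStep (k : ℕ) (δ : Q → ℕ → Q) : ℕ → Q → ℕ → Q
  | 0, q, _ => q
  | p + 1, q, D => δ (blockStep k δ p q (D / k)) (D % k)

lemma blockStep_zero_right (k : ℕ) (δ : Q → ℕ → Q) (p : ℕ) (q : Q) :
    blockStep k δ p q 0 = (fun q => δ q 0)^[p] q := by
  induction p with
  | zero => rfl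
  | succ p ih => rw [blockStep, Function.iterate_succ_apply', Nat.zero_div, Nat.zero_mod, ih]

lemma IsRun.blockStep {δ : Q → ℕ → Q} {s : ℕ → Q} (hs : IsRun k δ s) (p : ℕ) :
    IsRun (k ^ p) (blockStep k δ p) s := by
  induction p with
  | zero =>
    intro n D hD
    obtain rfl : D = 0 := by simpa using hD
    simp [_root_.blockStep]
  | succ p ih =>
    intro n D hD
    have hk : 0 < k := Nat.pos_of_ne_zero (by rintro rfl; simp at hD)
    have hquot : D / k < k ^ p := by rwa [Nat.div_lt_iff_lt_mul hk, ← pow_succ]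
    have hsplit : k ^ (p + 1) * n + D = k * (k ^ p * n + D / k) + D % k := by
      conv_lhs => rw [← Nat.div_add_mod D k]
      ring
    rw [hsplit, hs _ _ (Nat.mod_lt D hk), ih _ _ hquot, _root_.blockStep]

lemma exists_isIdempotentElem_pow {M : Type*} [Monoid M] [Finite M] (a : M) :
    ∃ p ≠ 0, IsIdempotentElem (a ^ p) := by
  let : TopologicalSpace M := ⊥
  have : DiscreteTopology M := ⟨rfl⟩
  obtain ⟨_, ⟨p, hp, rfl⟩, hidem⟩ := exists_idempotent_in_compact_subsemigroup
    (fun r : M => continuous_of_discreteTopology) {x | ∃ p ≠ 0, a ^ p = x}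
    ⟨a, 1, one_ne_zero, pow_one a⟩ (Set.toFinite _).isCompact
    (by rintro _ ⟨m, hm, rfl⟩ _ ⟨n, -, rfl⟩; exact ⟨m + n, by omega, pow_add a m n⟩)
  exact ⟨p, hp, hidem⟩

lemma exists_iterate_idempotent [Finite Q] (f : Q → Q) :
    ∃ p ≠ 0, ∀ q, f^[p] (f^[p] q) = f^[p] q := by
  have : Finite (Function.End Q) := inferInstanceAs (Finite (Q → Q))
  obtain ⟨p, hp, hidem⟩ := exists_isIdempotentElem_pow (M := Function.End Q) f
  exact ⟨p, hp, congrFun hidem⟩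

lemma foldl_reverse_digits_mul_add (hk : 1 < k) (δ : Q → ℕ → Q) (q₀ : Q) {n d : ℕ} (hn : n ≠ 0)
    (hd : d < k) : (k.digits (k * n + d)).reverse.foldl δ q₀ =
      δ ((k.digits n).reverse.foldl δ q₀) d := by
  rw [add_comm, Nat.digits_add k hk d n hd (Or.inr hn)]
  simp

namespace IsAutomaticSeq

lemma comp {Δ E : Type*} {h : ℕ → Δ} (hh : IsAutomaticSeq k h) (f : Δ → E) :
    IsAutomaticSeq k fun n => f (h n) :=
  let ⟨Q, hQ, q₀, δ, τ, hτ⟩ := hh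
  ⟨Q, hQ, q₀, δ, f ∘ τ, fun n => congrArg f (hτ n)⟩

-- The extra state `none` is the state before the first nonzero digit.
lemma exists_isRun {Δ : Type*} {h : ℕ → Δ} (hk : 1 < k) (hh : IsAutomaticSeq k h) :
    ∃ (Q : Type) (_ : Finite Q) (δ : Q → ℕ → Q) (s : ℕ → Q) (τ : Q → Δ),
      IsRun k δ s ∧ ∀ n, h n = τ (s n) := by
  obtain ⟨Q, hQ, q₀, δ, τ, hτ⟩ := hh
  let s : ℕ → Option Q := fun n => if n = 0 then none else some ((k.digits n).reverse.foldl δ q₀)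
  refine ⟨Option Q, inferInstance, fun o d => o.elim (s d) fun q => some (δ q d), s,
    fun o => τ (o.getD q₀), fun n d hd => ?_, fun n => ?_⟩
  · rcases eq_or_ne n 0 with rfl | hn
    · simp [s]
    · have hne : k * n + d ≠ 0 := by positivity
      simp only [s, if_neg hn, if_neg hne, foldl_reverse_digits_mul_add hk δ q₀ hn hd,
        Option.elim_some]
  · rcases eq_or_ne n 0 with rfl | hn
    · simp [s, hτ]
    · simp [s, hn, hτ]

end IsAutomaticSeq

end Automaton

theorem upper_density_automatic_set_rational_general
    (k : ℕ) (hk : 2 ≤ k) (h : ℕ → ℚ) (hh : IsAutomaticSeq k h) :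
    ∃ q : ℚ, Filter.atTop.limsup
      (fun N : ℕ => ((∑ n ∈ Finset.range N, h n : ℚ) : ℝ) / N) = (q : ℝ) := by
  obtain ⟨Q, _, δ, s, τ, hs, hτ⟩ := hh.exists_isRun hk
  obtain ⟨p, hp, hidem⟩ := exists_iterate_idempotent fun q => δ q 0
  simp only [hτ]
  exact (hs.blockStep p).exists_limsup_average_eq (Nat.one_lt_pow hp hk)
    (fun q => by simpa only [blockStep_zero_right] using hidem q) τ

lemma piCount_eq_sum_indicator (S : Set ℕ) (N : ℕ) :
    piCount S N = ∑ n ∈ Finset.range N, S.indicator (fun _ => 1) n := by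
  classical
  have hfilter : S ∩ Set.Iio N = ((Finset.range N).filter (· ∈ S) : Finset ℕ) := by
    ext n
    simp [and_comm]
  rw [piCount, hfilter, Set.ncard_coe_finset, Finset.card_filter]
  rfl

theorem upper_density_automatic_set_rational
    (k : ℕ) (hk : 2 ≤ k) (S : Set ℕ) (hS : IsAutomaticSet k S) :
    ∃ q : ℚ, Filter.atTop.limsup (fun N : ℕ => (piCount S N : ℝ) / N) = (q : ℝ) := by
  simpa [piCount_eq_sum_indicator] using
    upper_density_automatic_set_rational_general k hk _ (hS.comp Nat.cast)
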